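/- arXiv:2303.02557 — 2 statements merged into one kernel-verified Lean document; each statement's English description precedes it below -/
import Mathlib

section
/- Let Q be the optimal Q-function for reward r, and let f : ℝ → ℝ satisfy: (1) f is concave; (2i) f(x+y) ≥ f(x) + f(y) for all x, y; (2ii) f(γx) ≥ γ·f(x) for all x; (3) f(max_{a∈A} 𝒬(s,a)) ≥ max_{a∈A} f(𝒬(s,a)) for every function 𝒬 : S × A → ℝ and every s ∈ S. Define V_f(s) = max_{a∈A} f(Q(s,a)) and r̂_C(s,a) = f(Q(s,a)) − f(r(s,a)) − γ·∑_{s'} p(s'|s,a)·V_f(s'), and let Ĉ be the optimal Q-function for reward r̂_C. If Q̃ is the optimal Q-function for the transformed reward (s,a) ↦ f(r(s,a)), then for all (s,a): f(Q(s,a)) − Ĉ(s,a) ≤ Q̃(s,a) ≤ f(Q(s,a)). -/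
/-!
Both inequalities follow from a comparison principle (`nonpos_of_le_discounted_max`): a function `D`
with `D s a ≤ γ ∑ p(s'|s,a) max D(s', ·)` is nonpositive, since its global maximum `M` satisfies
`M ≤ γ M`. It is applied to `Q̃ - f ∘ Q` and to `f ∘ Q - Ĉ - Q̃`. For the first, superadditivity,
superhomogeneity, Jensen's inequality and the condition on maxima show that `f ∘ Q` is a
supersolution of the Bellman equation for the reward `f ∘ r`. For the second, the definition of `r̂_C`
turns the Bellman equations into an identity, and subadditivity of the maximum does the rest.
-/

open Finset

/-- Maximum of a real-valued function over a nonempty finite action set. -/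
noncomputable def amax {A : Type*} [Fintype A] [Nonempty A] (g : A → ℝ) : ℝ :=
  Finset.univ.sup' Finset.univ_nonempty g

lemma le_amax {A : Type*} [Fintype A] [Nonempty A] (g : A → ℝ) (a : A) : g a ≤ amax g :=
  Finset.le_sup' g (Finset.mem_univ a)

lemma amax_le {A : Type*} [Fintype A] [Nonempty A] {g : A → ℝ} {c : ℝ} (h : ∀ a, g a ≤ c) :
    amax g ≤ c :=
  Finset.sup'_le _ _ fun a _ => h a

/-- Comparison principle: a subsolution of the Bellman optimality equation with zero reward is
nonpositive. -/
lemma nonpos_of_le_discounted_max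
    {S A : Type*} [Fintype S] [Fintype A] [Nonempty A] (p : S → A → S → ℝ)
    (hp_nonneg : ∀ s a s', 0 ≤ p s a s') (hp_sum : ∀ s a, ∑ s', p s a s' = 1)
    (γ : ℝ) (hγ0 : 0 < γ) (hγ1 : γ < 1) (D : S → A → ℝ)
    (hD : ∀ s a, D s a ≤ γ * ∑ s', p s a s' * amax (fun a' => D s' a')) (s : S) (a : A) :
    D s a ≤ 0 := by
  have : Nonempty S := ⟨s⟩
  obtain ⟨⟨s₀, a₀⟩, h₀⟩ := Finite.exists_max (fun x : S × A => D x.1 x.2)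
  have hsum : ∑ s', p s₀ a₀ s' * amax (fun a' => D s' a') ≤ D s₀ a₀ :=
    calc ∑ s', p s₀ a₀ s' * amax (fun a' => D s' a')
        ≤ ∑ s', p s₀ a₀ s' * D s₀ a₀ :=
          Finset.sum_le_sum fun s' _ =>
            mul_le_mul_of_nonneg_left (amax_le fun a' => h₀ (s', a')) (hp_nonneg _ _ _)
      _ = D s₀ a₀ := by rw [← Finset.sum_mul, hp_sum, one_mul]
  have hM : D s₀ a₀ ≤ γ * D s₀ a₀ :=
    (hD s₀ a₀).trans (mul_le_mul_of_nonneg_left hsum hγ0.le)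
  have hM0 : D s₀ a₀ ≤ 0 := by nlinarith
  exact (h₀ (s, a)).trans hM0

/-- **Concave conditions, standard RL (Lemma 4.3).** -/
theorem concave_conditions_standard_rl
    {S A : Type*} [Fintype S] [Fintype A] [Nonempty S] [Nonempty A]
    (p : S → A → S → ℝ)
    (hp_nonneg : ∀ s a s', 0 ≤ p s a s')
    (hp_sum : ∀ s a, ∑ s', p s a s' = 1)
    (γ : ℝ) (hγ0 : 0 < γ) (hγ1 : γ < 1)
    (r : S → A → ℝ)
    -- Q is the optimal Q-function for reward r
    (Q : S → A → ℝ)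
    (hQ : ∀ s a, Q s a = r s a + γ * ∑ s', p s a s' * amax (fun a' => Q s' a'))
    -- the transformation function f and its conditions
    (f : ℝ → ℝ)
    (hf_concave : ConcaveOn ℝ Set.univ f)
    (hf_superadd : ∀ x y, f x + f y ≤ f (x + y))
    (hf_superhom : ∀ x, γ * f x ≤ f (γ * x))
    (hf_max : ∀ (𝒬 : S → A → ℝ) (s : S),
      amax (fun a => f (𝒬 s a)) ≤ f (amax (fun a => 𝒬 s a)))
    -- V_f, the auxiliary reward r̂_C, and Ĉ the optimal Q-function for r̂_C
    (Vf : S → ℝ)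
    (hVf : ∀ s, Vf s = amax (fun a => f (Q s a)))
    (rCh : S → A → ℝ)
    (hrCh : ∀ s a, rCh s a = f (Q s a) - f (r s a) - γ * (∑ s', p s a s' * Vf s'))
    (Ch : S → A → ℝ)
    (hCh : ∀ s a, Ch s a = rCh s a + γ * ∑ s', p s a s' * amax (fun a' => Ch s' a'))
    -- Q̃ is the optimal Q-function for the transformed reward f ∘ r
    (Qt : S → A → ℝ)
    (hQt : ∀ s a, Qt s a = f (r s a) + γ * ∑ s', p s a s' * amax (fun a' => Qt s' a')) :
    ∀ s a, f (Q s a) - Ch s a ≤ Qt s a ∧ Qt s a ≤ f (Q s a) := by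
  have hmono : ∀ (s : S) (a : A) (u v : S → ℝ), (∀ s', u s' ≤ v s') →
      ∑ s', p s a s' * u s' ≤ ∑ s', p s a s' * v s' := fun s a u v h =>
    Finset.sum_le_sum fun s' _ => mul_le_mul_of_nonneg_left (h s') (hp_nonneg s a s')
  -- `f ∘ Q` is a supersolution of the Bellman equation for the reward `f ∘ r`
  have hsuper : ∀ s a, f (r s a) + γ * ∑ s', p s a s' * Vf s' ≤ f (Q s a) := by
    intro s a
    have hjensen : ∑ s', p s a s' * f (amax fun a' => Q s' a')
        ≤ f (∑ s', p s a s' * amax fun a' => Q s' a') := by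
      simpa only [smul_eq_mul] using hf_concave.le_map_sum (t := Finset.univ) (w := p s a)
        (p := fun s' => amax fun a' => Q s' a')
        (fun s' _ => hp_nonneg s a s') (hp_sum s a) (fun _ _ => Set.mem_univ _)
    have hmax : ∑ s', p s a s' * Vf s' ≤ ∑ s', p s a s' * f (amax fun a' => Q s' a') :=
      hmono s a _ _ fun s' => (hVf s').trans_le (hf_max Q s')
    calc f (r s a) + γ * ∑ s', p s a s' * Vf s'
        ≤ f (r s a) + γ * f (∑ s', p s a s' * amax fun a' => Q s' a') := by
          have := mul_le_mul_of_nonneg_left (hmax.trans hjensen) hγ0.le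
          linarith
      _ ≤ f (r s a) + f (γ * ∑ s', p s a s' * amax fun a' => Q s' a') := by
          have := hf_superhom (∑ s', p s a s' * amax fun a' => Q s' a')
          linarith
      _ ≤ f (Q s a) := by
          rw [hQ s a]
          exact hf_superadd _ _
  have hupper := nonpos_of_le_discounted_max p hp_nonneg hp_sum γ hγ0 hγ1
    (fun s a => Qt s a - f (Q s a)) (by
      intro s a
      have hle : ∑ s', p s a s' * amax (fun a' => Qt s' a') ≤
          ∑ s', p s a s' * (amax (fun a' => Qt s' a' - f (Q s' a')) + Vf s') := by
        refine hmono s a _ _ fun s' => amax_le fun a' => ?_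
        have h1 := le_amax (fun a' => Qt s' a' - f (Q s' a')) a'
        have h2 := le_amax (fun a' => f (Q s' a')) a'
        rw [← hVf s'] at h2
        linarith
      simp only [mul_add, Finset.sum_add_distrib] at hle
      have h1 := mul_le_mul_of_nonneg_left hle hγ0.le
      have h2 := hsuper s a
      have h3 := hQt s a
      linarith)
  have hlower := nonpos_of_le_discounted_max p hp_nonneg hp_sum γ hγ0 hγ1
    (fun s a => f (Q s a) - Ch s a - Qt s a) (by
      intro s a
      have hle : ∑ s', p s a s' * Vf s' ≤
          ∑ s', p s a s' * (amax (fun a' => f (Q s' a') - Ch s' a' - Qt s' a') +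
            amax (fun a' => Ch s' a') + amax (fun a' => Qt s' a')) := by
        refine hmono s a _ _ fun s' => (hVf s').trans_le (amax_le fun a' => ?_)
        have h1 := le_amax (fun a' => f (Q s' a') - Ch s' a' - Qt s' a') a'
        have h2 := le_amax (fun a' => Ch s' a') a'
        have h3 := le_amax (fun a' => Qt s' a') a'
        linarith
      simp only [mul_add, Finset.sum_add_distrib] at hle
      have h1 := mul_le_mul_of_nonneg_left hle hγ0.le
      have h2 := hrCh s a
      have h3 := hQt s a
      have h4 := hCh s a
      linarith)
  intro s a
  have h1 := hupper s a
  have h2 := hlower s a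
  constructor <;> linarith
end

section
/- For k = 1, …, M (with M ≥ 1), let Q^(k) be the optimal soft Q-function for reward r^(k). If Q̃ is the optimal soft Q-function for the OR-composite reward (s,a) ↦ max_{1≤k≤M} r^(k)(s,a), then Q̃(s,a) ≥ max_{1≤k≤M} Q^(k)(s,a) for all (s,a); and if Q̃' is the optimal soft Q-function for the AND-composite reward (s,a) ↦ min_{1≤k≤M} r^(k)(s,a), then Q̃'(s,a) ≤ min_{1≤k≤M} Q^(k)(s,a) for all (s,a). -/
/-!
Both inequalities follow from a comparison principle (`soft_bellman_mono`): if `r₁ ≤ r₂`, then the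
soft Q-functions satisfy `Q₁ ≤ Q₂`. Let `d` be the maximum of `Q₁ - Q₂`. Since log-sum-exp is
monotone and commutes with constant shifts (`softV_le_add`), evaluating the two Bellman equations
at a maximizing pair gives `d ≤ γ * d`, hence `d ≤ 0` because `γ < 1`. The theorem applies this
with `r k ≤ max r` and `min r ≤ r k`.
-/

open Finset

/-- Minimum of a real-valued function over a nonempty finite (index) set. -/
noncomputable def amin {A : Type*} [Fintype A] [Nonempty A] (g : A → ℝ) : ℝ :=
  Finset.univ.inf' Finset.univ_nonempty g

/-- The soft (log-sum-exp) value of `g` under the prior action distribution `π0`. -/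
noncomputable def softV {A : Type*} [Fintype A] (π0 : A → ℝ) (g : A → ℝ) : ℝ :=
  Real.log (∑ a, π0 a * Real.exp (g a))

/-- The log-sum-exp value is monotone and commutes with adding constants. -/
lemma softV_le_add {A : Type*} [Fintype A] [Nonempty A] (π0 : A → ℝ) (hπ : ∀ a, 0 < π0 a)
    (g h : A → ℝ) (d : ℝ) (hgh : ∀ a, g a ≤ h a + d) : softV π0 g ≤ softV π0 h + d := by
  have pos : ∀ f : A → ℝ, 0 < ∑ a, π0 a * Real.exp (f a) := fun f =>
    Finset.sum_pos (fun a _ => mul_pos (hπ a) (Real.exp_pos _)) Finset.univ_nonempty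
  unfold softV
  rw [← Real.log_exp d, ← Real.log_mul (pos h).ne' (Real.exp_pos _).ne']
  refine Real.log_le_log (pos g) ?_
  rw [Finset.sum_mul]
  refine Finset.sum_le_sum fun a _ => ?_
  rw [mul_assoc, ← Real.exp_add]
  exact mul_le_mul_of_nonneg_left (Real.exp_le_exp.mpr (hgh a)) (hπ a).le

/-- Comparison principle: solutions of the soft Bellman optimality equation are monotone in the
reward. -/
lemma soft_bellman_mono {S A : Type*} [Fintype S] [Fintype A] [Nonempty S] [Nonempty A]
    (p : S → A → S → ℝ) (hp_nonneg : ∀ s a s', 0 ≤ p s a s')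
    (hp_sum : ∀ s a, ∑ s', p s a s' = 1)
    (γ : ℝ) (hγ0 : 0 < γ) (hγ1 : γ < 1)
    (π0 : S → A → ℝ) (hπ0_pos : ∀ s a, 0 < π0 s a)
    (r₁ r₂ Q₁ Q₂ : S → A → ℝ) (hr : ∀ s a, r₁ s a ≤ r₂ s a)
    (h₁ : ∀ s a, Q₁ s a = r₁ s a + γ * ∑ s', p s a s' * softV (π0 s') (fun a' => Q₁ s' a'))
    (h₂ : ∀ s a, Q₂ s a = r₂ s a + γ * ∑ s', p s a s' * softV (π0 s') (fun a' => Q₂ s' a'))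
    (s : S) (a : A) : Q₁ s a ≤ Q₂ s a := by
  obtain ⟨⟨s₀, a₀⟩, hmax⟩ := Finite.exists_max (fun x : S × A => Q₁ x.1 x.2 - Q₂ x.1 x.2)
  set d := Q₁ s₀ a₀ - Q₂ s₀ a₀ with hd
  have hle : ∀ s a, Q₁ s a ≤ Q₂ s a + d := fun s a => by
    have h : Q₁ s a - Q₂ s a ≤ d := hmax (s, a)
    linarith
  have hsum : ∑ s', p s₀ a₀ s' * softV (π0 s') (fun a' => Q₁ s' a')
      ≤ ∑ s', p s₀ a₀ s' * softV (π0 s') (fun a' => Q₂ s' a') + d := by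
    calc _ ≤ ∑ s', p s₀ a₀ s' * (softV (π0 s') (fun a' => Q₂ s' a') + d) :=
          Finset.sum_le_sum fun s' _ => mul_le_mul_of_nonneg_left
            (softV_le_add _ (hπ0_pos s') _ _ d (hle s')) (hp_nonneg _ _ _)
      _ = _ := by simp only [mul_add, Finset.sum_add_distrib, ← Finset.sum_mul, hp_sum, one_mul]
  have hγd : d ≤ γ * d := by
    have := mul_le_mul_of_nonneg_left hsum hγ0.le
    linarith [h₁ s₀ a₀, h₂ s₀ a₀, hr s₀ a₀]
  have hd0 : d ≤ 0 := by nlinarith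
  linarith [hle s a]

/-- **OR and AND compositions, entropy-regularized RL.** -/
theorem or_and_composition_entreg_rl
    {S A : Type*} [Fintype S] [Fintype A] [Nonempty S] [Nonempty A]
    (p : S → A → S → ℝ)
    (hp_nonneg : ∀ s a s', 0 ≤ p s a s')
    (hp_sum : ∀ s a, ∑ s', p s a s' = 1)
    (γ : ℝ) (hγ0 : 0 < γ) (hγ1 : γ < 1)
    -- prior policy
    (π0 : S → A → ℝ)
    (hπ0_pos : ∀ s a, 0 < π0 s a)
    (hπ0_sum : ∀ s, ∑ a, π0 s a = 1)
    (M : ℕ) [NeZero M]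
    (r : Fin M → S → A → ℝ)
    -- Q k is the optimal soft Q-function for reward r k
    (Q : Fin M → S → A → ℝ)
    (hQ : ∀ k s a, Q k s a = r k s a
      + γ * ∑ s', p s a s' * softV (π0 s') (fun a' => Q k s' a'))
    -- Q̃ is the optimal soft Q-function for the OR-composite reward
    (Qt : S → A → ℝ)
    (hQt : ∀ s a, Qt s a = amax (fun k => r k s a)
      + γ * ∑ s', p s a s' * softV (π0 s') (fun a' => Qt s' a'))
    -- Q̃' is the optimal soft Q-function for the AND-composite reward
    (Qt' : S → A → ℝ)
    (hQt' : ∀ s a, Qt' s a = amin (fun k => r k s a)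
      + γ * ∑ s', p s a s' * softV (π0 s') (fun a' => Qt' s' a')) :
    (∀ s a, amax (fun k => Q k s a) ≤ Qt s a) ∧
    (∀ s a, Qt' s a ≤ amin (fun k => Q k s a)) := by
  refine ⟨fun s a => Finset.sup'_le _ _ fun k _ => ?_, fun s a => Finset.le_inf' _ _ fun k _ => ?_⟩
  · exact soft_bellman_mono p hp_nonneg hp_sum γ hγ0 hγ1 π0 hπ0_pos _ _ _ _
      (fun s a => Finset.le_sup' (fun k => r k s a) (Finset.mem_univ k)) (hQ k) hQt s a
  · exact soft_bellman_mono p hp_nonneg hp_sum γ hγ0 hγ1 π0 hπ0_pos _ _ _ _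
      (fun s a => Finset.inf'_le (fun k => r k s a) (Finset.mem_univ k)) hQt' (hQ k) s a
end
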